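/- Let β = (β_1,…,β_t) ∈ Z^t with β_1+⋯+β_t ≥ 0, let D be a sum of n ≥ 2g + 2(β_1+⋯+β_t) + 2 pairwise distinct rational places avoiding P, Q_1,…,Q_t, let a_1 < ⋯ < a_n be the elements of Ĥ*_β and a_0 = a_1 − 1. If the flag (C_L(D, a_iP+G_β))_{i=0,…,n} satisfies the isometry-dual condition, then Ĥ*_β = {a ∈ Ĥ_β : a^⊥ + 1 ∈ Ĥ_β}, where a^⊥ = n + 2g − 2 − 2(β_1+⋯+β_t) − a. -/

import Mathlib

/-!
Write `σ = deg G_β`, `N = n + 2g - 2 - 2σ`, and let `K` be the canonical divisor. The kernel of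
evaluation on `L(E)` is `L(E - D)`, so `dim C_L(D, E) = ℓ(E) - ℓ(E - D)`; hence `b ∈ Ĥ*_β` exactly
when `ℓ(bP + G_β)` jumps at `b` and `ℓ(bP + G_β - D)` does not. If `K + D` is linearly equivalent
to `NP + 2G_β`, then Riemann-Roch expresses `ℓ(bP + G_β - D)` through `ℓ((N - b)P + G_β)`, and the
second condition becomes `b^⊥ + 1 ∈ Ĥ_β`. Everything therefore rests on this linear equivalence
(`exists_pdiv_of_dual`).

Let `A_m` be the divisor `cP + G_β` of degree `m`. Since the flag has `n` steps, the index of a code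
in it is its dimension (`exists_flag_index`), so the isometry-dual condition pairs `C_L(D, A_m)` with
`C_L(D, A_{n+2g-2-m})` for `2g - 1 ≤ m ≤ n - 1`. In place of the residue theorem, a count with
Riemann-Roch gives a vector `u` without zero entries orthogonal to the local evaluations of
`L(K + D)` (`exists_dual_vector`). Together these yield injective linear maps
`ψ : L(K + D - A_{n+2g-2-m}) → L(A_m)` which at the places of `D` are multiplication by a fixed
vector. For `m = 2g - 1` and `m = 2g` with `g ≥ 1`, the map `ψ` is multiplication by a function `h`
(`exists_pdiv_of_transfer`): otherwise the kernel and the image of `z ↦ h z - ψ(z)` would contradict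
the bound `dim U + dim V ≤ dim UV + 1` (`finrank_add_le_of_mul_mem`, a sumset estimate for the
valuations at `P`) combined with Clifford's inequality (`ell_lt_genus`). A multiplication map between
spaces of divisors of degree `2g` forces the divisors to differ by `(h)` (`eq_add_pdiv_of_mul_mem`).
In genus zero any two divisors of equal degree are linearly equivalent.
-/

open scoped BigOperators Classical

noncomputable section

namespace AGCodes

/-- An algebraic function field `F` of one variable over the finite field `Fq`,
presented together with its set of places, discrete valuations, degrees of places,
genus, Riemann-Roch spaces, a canonical divisor, evaluation (residue) maps at
rational places, and the basic axioms these satisfy (including the Riemann-Roch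
theorem). Divisors are finitely supported `ℤ`-valued functions on places. -/
structure Data (Fq F Place : Type*) [Field Fq] [Fintype Fq] [Field F] [Algebra Fq F] where
  /-- the (normalized, additive) discrete valuation at each place; by convention `v P 0 = 0` -/
  v : Place → F → ℤ
  /-- the degree of a place -/
  degP : Place → ℕ
  /-- the genus of the function field -/
  genus : ℕ
  /-- the Riemann-Roch space `L(D)` of a divisor `D` -/
  RR : (Place →₀ ℤ) → Submodule Fq F
  /-- evaluation (residue) of a function at a place; meaningful at rational places
  for functions with no pole there -/
  ev : Place → F → Fq
  /-- a fixed canonical divisor -/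
  Kdiv : Place →₀ ℤ
  degP_pos : ∀ P, 0 < degP P
  v_zero : ∀ P, v P 0 = 0
  v_mul : ∀ P (f g : F), f ≠ 0 → g ≠ 0 → v P (f * g) = v P f + v P g
  v_add : ∀ P (f g : F), f ≠ 0 → g ≠ 0 → f + g ≠ 0 → min (v P f) (v P g) ≤ v P (f + g)
  v_algebraMap : ∀ P (c : Fq), c ≠ 0 → v P (algebraMap Fq F c) = 0
  v_exists_uniformizer : ∀ P : Place, ∃ f : F, f ≠ 0 ∧ v P f = 1
  v_support_finite : ∀ f : F, f ≠ 0 → {P : Place | v P f ≠ 0}.Finite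
  /-- `Fq` is the full constant field: functions with no poles are constants -/
  const_of_no_poles : ∀ f : F, f ≠ 0 → (∀ P, 0 ≤ v P f) → ∃ c : Fq, f = algebraMap Fq F c
  /-- principal divisors have degree zero -/
  deg_principal : ∀ f : F, f ≠ 0 → ∑ᶠ P : Place, v P f * degP P = 0
  mem_RR : ∀ (D : Place →₀ ℤ) (f : F), f ∈ RR D ↔ f = 0 ∨ ∀ P, 0 ≤ v P f + D P
  rr_findim : ∀ D : Place →₀ ℤ, FiniteDimensional Fq (RR D)
  /-- the Riemann-Roch theorem -/
  riemann_roch : ∀ D : Place →₀ ℤ,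
    (Module.finrank Fq (RR D) : ℤ)
      = (D.sum fun P k => k * degP P) + 1 - genus
        + Module.finrank Fq (RR (Kdiv - D))
  ev_algebraMap : ∀ (P : Place) (c : Fq), ev P (algebraMap Fq F c) = c
  ev_add : ∀ (P : Place) (f g : F), degP P = 1 →
    (f = 0 ∨ 0 ≤ v P f) → (g = 0 ∨ 0 ≤ v P g) → ev P (f + g) = ev P f + ev P g
  ev_mul : ∀ (P : Place) (f g : F), degP P = 1 →
    (f = 0 ∨ 0 ≤ v P f) → (g = 0 ∨ 0 ≤ v P g) → ev P (f * g) = ev P f * ev P g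
  ev_eq_zero_iff : ∀ (P : Place) (f : F), degP P = 1 → f ≠ 0 → 0 ≤ v P f →
    (ev P f = 0 ↔ 1 ≤ v P f)

variable {Fq F Place : Type*} [Field Fq] [Fintype Fq] [Field F] [Algebra Fq F]

/-- The divisor `β₁Q₁ + ⋯ + β_tQ_t`. -/
def Gdiv {t : ℕ} (Q : Fin t → Place) (β : Fin t → ℤ) : Place →₀ ℤ :=
  ∑ i, Finsupp.single (Q i) (β i)

/-- The divisor `P₁ + ⋯ + P_n` attached to a tuple of places. -/
def Ddiv {n : ℕ} (PP : Fin n → Place) : Place →₀ ℤ :=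
  ∑ j, Finsupp.single (PP j) 1

namespace Data

variable (X : Data Fq F Place)

/-- The degree of a divisor. -/
def divDeg (D : Place →₀ ℤ) : ℤ := D.sum fun P k => k * X.degP P

/-- `ℓ(D)`, the dimension of the Riemann-Roch space of `D`. -/
def ell (D : Place →₀ ℤ) : ℕ := Module.finrank Fq (X.RR D)

/-- A place is rational if it has degree one. -/
def IsRational (P : Place) : Prop := X.degP P = 1

/-- A divisor is canonical iff it has degree `2g-2` and `ℓ = g`. -/
def IsCanonical (W : Place →₀ ℤ) : Prop :=
  X.divDeg W = 2 * (X.genus : ℤ) - 2 ∧ X.ell W = X.genus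

/-- The generalized Weierstrass semigroup `Ĥ(Q₁,…,Q_t)`: vectors
`(-v_{Q₁}(h),…,-v_{Q_t}(h))` for `h ≠ 0` regular outside `{Q₁,…,Q_t}`. -/
def Hhat {t : ℕ} (Q : Fin t → Place) : Set (Fin t → ℤ) :=
  {α | ∃ h : F, h ≠ 0 ∧ (∀ P : Place, (∀ i, P ≠ Q i) → 0 ≤ X.v P h) ∧
    ∀ i, α i = - X.v (Q i) h}

/-- The classical Weierstrass semigroup `H(P) = {a ∈ ℕ : ∃ z, (z)_∞ = aP}`
(viewed inside `ℤ`). -/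
def Hone (P : Place) : Set ℤ :=
  {a | 0 ≤ a ∧ ∃ h : F, h ≠ 0 ∧ (∀ R : Place, R ≠ P → 0 ≤ X.v R h) ∧ X.v P h = -a}

/-- `Ĥ_β = {a ∈ ℤ : ℓ(aP + G_β) ≠ ℓ((a-1)P + G_β)}`. -/
def HhatB (P : Place) {t : ℕ} (Q : Fin t → Place) (β : Fin t → ℤ) : Set ℤ :=
  {a | X.ell (Finsupp.single P a + Gdiv Q β) ≠ X.ell (Finsupp.single P (a-1) + Gdiv Q β)}

/-- The algebraic geometry (evaluation) code `C_L(D, G)` attached to the tuple of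
places `PP` (determining `D = P₁ + ⋯ + P_n`) and the divisor `G`. -/
def code {n : ℕ} (PP : Fin n → Place) (G : Place →₀ ℤ) : Set (Fin n → Fq) :=
  {w | ∃ z ∈ X.RR G, ∀ i, w i = X.ev (PP i) z}

/-- The dimension of the code `C_L(D, G)`. -/
def codeDim {n : ℕ} (PP : Fin n → Place) (G : Place →₀ ℤ) : ℕ :=
  Module.finrank Fq (Submodule.span Fq (X.code PP G))

/-- `Ĥ*_β = {a ∈ ℤ : C_L(D, aP+G_β) ≠ C_L(D, (a-1)P+G_β)}`. -/
def HhatS {n : ℕ} (PP : Fin n → Place) (P : Place) {t : ℕ} (Q : Fin t → Place)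
    (β : Fin t → ℤ) : Set ℤ :=
  {a | X.code PP (Finsupp.single P a + Gdiv Q β)
      ≠ X.code PP (Finsupp.single P (a-1) + Gdiv Q β)}

end Data

/-- The dual code with respect to the standard inner product. -/
def dualCode {n : ℕ} (C : Set (Fin n → Fq)) : Set (Fin n → Fq) :=
  {y | ∀ c ∈ C, ∑ i, y i * c i = 0}

/-- The isometric code `x · C = {(x₁c₁,…,x_nc_n) : c ∈ C}`. -/
def scaleCode {n : ℕ} (x : Fin n → Fq) (C : Set (Fin n → Fq)) : Set (Fin n → Fq) :=
  (fun c => fun i => x i * c i) '' C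

/-- A flag of codes `C₀, C₁, …, C_s` is `x`-isometry-dual if `x` has all coordinates
nonzero and `C_i = x · C_{s-i}^⊥` for all `i`. -/
def IsIsometryDualFlag {n s : ℕ} (C : Fin (s+1) → Set (Fin n → Fq))
    (x : Fin n → Fq) : Prop :=
  (∀ i, x i ≠ 0) ∧ ∀ i, C i = scaleCode x (dualCode (C (Fin.rev i)))

end AGCodes

open AGCodes

namespace AGCodes

namespace Data

variable {Fq F Place : Type*} [Field Fq] [Fintype Fq] [Field F] [Algebra Fq F]
variable (X : Data Fq F Place)

/-! ### Valuations and degrees of divisors -/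

lemma v_one (R : Place) : X.v R 1 = 0 := by
  simpa using X.v_algebraMap R 1 one_ne_zero

lemma v_inv (R : Place) {f : F} (hf : f ≠ 0) : X.v R f⁻¹ = - X.v R f := by
  have h := X.v_mul R f f⁻¹ hf (inv_ne_zero hf)
  rw [mul_inv_cancel₀ hf, v_one] at h
  omega

lemma v_exists_eq (R : Place) (k : ℤ) : ∃ f : F, f ≠ 0 ∧ X.v R f = k := by
  obtain ⟨t, ht, h1⟩ := X.v_exists_uniformizer R
  have hpow : ∀ m : ℕ, X.v R (t ^ m) = m := by
    intro m
    induction m with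
    | zero => simpa using X.v_one R
    | succ m ih => rw [pow_succ, X.v_mul R _ _ (pow_ne_zero _ ht) ht, ih, h1]; push_cast; ring
  rcases Int.eq_nat_or_neg k with ⟨m, rfl | rfl⟩
  · exact ⟨t ^ m, pow_ne_zero _ ht, hpow m⟩
  · refine ⟨(t ^ m)⁻¹, inv_ne_zero (pow_ne_zero _ ht), ?_⟩
    rw [X.v_inv R (pow_ne_zero _ ht), hpow]

lemma divDeg_add (D E : Place →₀ ℤ) : X.divDeg (D + E) = X.divDeg D + X.divDeg E := by
  unfold divDeg
  exact Finsupp.sum_add_index' (by simp) (by intros; ring)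

lemma divDeg_sub (D E : Place →₀ ℤ) : X.divDeg (D - E) = X.divDeg D - X.divDeg E := by
  unfold divDeg
  exact Finsupp.sum_sub_index (by intros; ring)

lemma divDeg_zero : X.divDeg 0 = 0 := by simp [divDeg]

lemma divDeg_single (R : Place) (k : ℤ) : X.divDeg (Finsupp.single R k) = k * X.degP R := by
  simp [divDeg]

lemma divDeg_sum {ι : Type*} (s : Finset ι) (D : ι → Place →₀ ℤ) :
    X.divDeg (∑ i ∈ s, D i) = ∑ i ∈ s, X.divDeg (D i) := by
  induction s using Finset.induction_on with
  | empty => simp [divDeg_zero]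
  | insert i s hi ih => rw [Finset.sum_insert hi, Finset.sum_insert hi, divDeg_add, ih]

lemma divDeg_nonneg {D : Place →₀ ℤ} (h : ∀ R, 0 ≤ D R) : 0 ≤ X.divDeg D :=
  Finset.sum_nonneg fun R _ => mul_nonneg (h R) (Int.natCast_nonneg _)

lemma eq_zero_of_divDeg_nonpos {D : Place →₀ ℤ} (h : ∀ R, 0 ≤ D R) (hd : X.divDeg D ≤ 0) :
    D = 0 := by
  have h0 : X.divDeg D = 0 := le_antisymm hd (X.divDeg_nonneg h)
  ext R
  by_contra hR
  have hs := (Finset.sum_eq_zero_iff_of_nonneg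
    (fun R _ => mul_nonneg (h R) (Int.natCast_nonneg _))).1 h0 R (Finsupp.mem_support_iff.2 hR)
  have hp := X.degP_pos R
  rcases mul_eq_zero.1 hs with h1 | h1
  · exact hR h1
  · omega

/-- The principal divisor `(f)` of a nonzero function. -/
def pdiv (f : F) (hf : f ≠ 0) : Place →₀ ℤ :=
  Finsupp.ofSupportFinite (fun R => X.v R f) (X.v_support_finite f hf)

@[simp] lemma pdiv_apply (f : F) (hf : f ≠ 0) (R : Place) : X.pdiv f hf R = X.v R f := rfl

lemma divDeg_pdiv (f : F) (hf : f ≠ 0) : X.divDeg (X.pdiv f hf) = 0 := by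
  rw [← X.deg_principal f hf]
  unfold divDeg Finsupp.sum
  rw [finsum_eq_sum_of_support_subset]
  · rfl
  · intro R hR
    simp only [Function.mem_support, ne_eq] at hR
    simp only [SetLike.mem_coe, Finsupp.mem_support_iff, pdiv_apply, ne_eq]
    intro h
    exact hR (by rw [h, zero_mul])

/-! ### Dimensions of Riemann-Roch spaces -/

instance instFiniteRR (D : Place →₀ ℤ) : FiniteDimensional Fq (X.RR D) := X.rr_findim D

lemma mem_RR_iff {D : Place →₀ ℤ} {f : F} (hf : f ≠ 0) :
    f ∈ X.RR D ↔ ∀ R, 0 ≤ X.v R f + D R := by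
  rw [X.mem_RR]; simp [hf]

lemma RR_mono {D E : Place →₀ ℤ} (h : ∀ R, D R ≤ E R) : X.RR D ≤ X.RR E := by
  intro f hf
  rw [X.mem_RR] at hf ⊢
  exact hf.imp_right fun hf R => by have := hf R; have := h R; omega

lemma mul_mem_RR {D E : Place →₀ ℤ} {f g : F} (hf : f ∈ X.RR D) (hg : g ∈ X.RR E) :
    f * g ∈ X.RR (D + E) := by
  by_cases hf0 : f = 0
  · simp [hf0]
  by_cases hg0 : g = 0
  · simp [hg0]
  rw [X.mem_RR_iff hf0] at hf
  rw [X.mem_RR_iff hg0] at hg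
  rw [X.mem_RR_iff (mul_ne_zero hf0 hg0)]
  intro R
  rw [X.v_mul R f g hf0 hg0, Finsupp.add_apply]
  have := hf R; have := hg R; omega

lemma ell_mono {D E : Place →₀ ℤ} (h : ∀ R, D R ≤ E R) : X.ell D ≤ X.ell E :=
  Submodule.finrank_mono (X.RR_mono h)

lemma RR_eq_bot_of_neg {D : Place →₀ ℤ} (h : X.divDeg D < 0) : X.RR D = ⊥ := by
  rw [eq_bot_iff]
  intro f hf
  by_contra hf0
  have hf0 : f ≠ 0 := hf0
  rw [X.mem_RR_iff hf0] at hf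
  have h1 : 0 ≤ X.divDeg (X.pdiv f hf0 + D) := X.divDeg_nonneg (fun R => by simpa using hf R)
  rw [divDeg_add, divDeg_pdiv] at h1
  omega

lemma ell_eq_zero_of_neg {D : Place →₀ ℤ} (h : X.divDeg D < 0) : X.ell D = 0 := by
  unfold ell; rw [X.RR_eq_bot_of_neg h]; simp

lemma rr (D : Place →₀ ℤ) :
    (X.ell D : ℤ) = X.divDeg D + 1 - X.genus + X.ell (X.Kdiv - D) := X.riemann_roch D

lemma ell_zero : X.ell 0 = 1 := by
  have h : X.RR 0 = Submodule.span Fq {(1 : F)} := by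
    ext f
    rw [Submodule.mem_span_singleton]
    constructor
    · intro hf
      by_cases hf0 : f = 0
      · exact ⟨0, by simp [hf0]⟩
      rw [X.mem_RR_iff hf0] at hf
      obtain ⟨c, hc⟩ := X.const_of_no_poles f hf0 (fun R => by simpa using hf R)
      exact ⟨c, by rw [hc, Algebra.smul_def, mul_one]⟩
    · rintro ⟨c, rfl⟩
      refine Submodule.smul_mem _ _ ?_
      rw [X.mem_RR_iff one_ne_zero]
      intro R
      simp [v_one]
  unfold ell
  rw [h, finrank_span_singleton one_ne_zero]

lemma ell_Kdiv : X.ell X.Kdiv = X.genus := by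
  have h := X.rr 0
  rw [ell_zero, divDeg_zero, sub_zero] at h
  push_cast at h; omega

lemma divDeg_Kdiv : X.divDeg X.Kdiv = 2 * X.genus - 2 := by
  have h := X.rr X.Kdiv
  rw [sub_self, ell_zero, ell_Kdiv] at h
  push_cast at h; omega

lemma ell_of_large {D : Place →₀ ℤ} (h : 2 * (X.genus : ℤ) - 1 ≤ X.divDeg D) :
    (X.ell D : ℤ) = X.divDeg D + 1 - X.genus := by
  have h1 := X.rr D
  rw [X.ell_eq_zero_of_neg (D := X.Kdiv - D) (by rw [divDeg_sub, divDeg_Kdiv]; omega)] at h1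
  push_cast at h1; omega

/-- Below degree `2g` the dimension is at most `g`: enlarge the divisor by a multiple of a rational
place up to degree `2g - 1`. -/
lemma ell_le_genus {P : Place} (hP : X.IsRational P) {D : Place →₀ ℤ}
    (h : X.divDeg D < 2 * X.genus) : X.ell D ≤ X.genus := by
  have hdeg : X.divDeg (D + Finsupp.single P (2 * X.genus - 1 - X.divDeg D))
      = 2 * X.genus - 1 := by
    rw [divDeg_add, divDeg_single, hP]; push_cast; ring
  have h1 := X.ell_of_large (D := D + Finsupp.single P (2 * X.genus - 1 - X.divDeg D)) hdeg.ge
  have h2 : X.ell D ≤ X.ell (D + Finsupp.single P (2 * X.genus - 1 - X.divDeg D)) := by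
    apply X.ell_mono
    intro R
    rw [Finsupp.add_apply, Finsupp.single_apply]
    split_ifs <;> omega
  omega

lemma ell_add_pdiv (D : Place →₀ ℤ) (h : F) (hh : h ≠ 0) :
    X.ell (D + X.pdiv h hh) = X.ell D := by
  have key : ∀ (D : Place →₀ ℤ) (h : F) (hh : h ≠ 0),
      X.ell (D + X.pdiv h hh) ≤ X.ell D := by
    intro D h hh
    refine LinearMap.finrank_le_finrank_of_injective
      (f := ((LinearMap.mulLeft Fq h).restrict (p := X.RR (D + X.pdiv h hh)) (q := X.RR D) ?_)) ?_
    · intro f hf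
      by_cases hf0 : f = 0
      · simp [hf0]
      rw [X.mem_RR_iff hf0] at hf
      rw [LinearMap.mulLeft_apply, X.mem_RR_iff (mul_ne_zero hh hf0)]
      intro R
      have := hf R
      rw [Finsupp.add_apply, pdiv_apply] at this
      rw [X.v_mul R h f hh hf0]; omega
    · intro f g hfg
      have : h * (f : F) = h * g := congrArg Subtype.val hfg
      exact Subtype.ext (mul_left_cancel₀ hh this)
  refine le_antisymm (key D h hh) ?_
  have h2 := key (D + X.pdiv h hh) h⁻¹ (inv_ne_zero hh)
  have h3 : D + X.pdiv h hh + X.pdiv h⁻¹ (inv_ne_zero hh) = D := by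
    ext R
    simp [X.v_inv R hh]
  rwa [h3] at h2

/-- Adding a rational place raises the dimension by at most one. -/
lemma ell_step {P : Place} (hP : X.IsRational P) (a : ℤ) (G : Place →₀ ℤ) :
    X.ell (Finsupp.single P (a - 1) + G) ≤ X.ell (Finsupp.single P a + G) ∧
      X.ell (Finsupp.single P a + G) ≤ X.ell (Finsupp.single P (a - 1) + G) + 1 := by
  have mono : ∀ R, (Finsupp.single P (a - 1) + G) R ≤ (Finsupp.single P a + G) R := by
    intro R
    rw [Finsupp.add_apply, Finsupp.add_apply, Finsupp.single_apply, Finsupp.single_apply]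
    split_ifs <;> omega
  refine ⟨X.ell_mono mono, ?_⟩
  have h1 := X.rr (Finsupp.single P a + G)
  have h2 := X.rr (Finsupp.single P (a - 1) + G)
  have h3 : X.ell (X.Kdiv - (Finsupp.single P a + G))
      ≤ X.ell (X.Kdiv - (Finsupp.single P (a - 1) + G)) := by
    apply X.ell_mono
    intro R
    have := mono R
    rw [Finsupp.sub_apply, Finsupp.sub_apply]
    omega
  rw [divDeg_add, divDeg_single, hP] at h1 h2
  push_cast at h1 h2
  omega

end Data
end AGCodes

namespace AGCodes

namespace Data

variable {Fq F Place : Type*} [Field Fq] [Fintype Fq] [Field F] [Algebra Fq F]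
variable (X : Data Fq F Place)

/-! ### Products of spaces of functions and Clifford's inequality -/

/-- The set of valuations at `P` of the nonzero elements of a space `U` of functions. -/
def valSet (P : Place) (U : Submodule Fq F) : Set ℤ := {k | ∃ f ∈ U, f ≠ 0 ∧ X.v P f = k}

lemma valSet_finite (P : Place) (U : Submodule Fq F) [FiniteDimensional Fq U] :
    (X.valSet P U).Finite := by
  have : Finite U := Module.finite_of_finite Fq
  refine (Set.finite_range fun f : U => X.v P f).subset ?_
  rintro k ⟨f, hf, -, hk⟩
  exact ⟨⟨f, hf⟩, hk⟩

/-- At a rational place, two functions of equal valuation have proportional leading terms. -/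
lemma exists_sub_smul {P : Place} (hP : X.IsRational P) {f g : F} (hf : f ≠ 0) (hg : g ≠ 0)
    (h : X.v P f = X.v P g) : ∃ c : Fq, f - c • g = 0 ∨ X.v P f < X.v P (f - c • g) := by
  have hq : f * g⁻¹ ≠ 0 := mul_ne_zero hf (inv_ne_zero hg)
  have hv : X.v P (f * g⁻¹) = 0 := by
    rw [X.v_mul P _ _ hf (inv_ne_zero hg), X.v_inv P hg]; omega
  set c := X.ev P (f * g⁻¹) with hc
  refine ⟨c, ?_⟩
  have hfac : f - c • g = (f * g⁻¹ + algebraMap Fq F (-c)) * g := by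
    rw [add_mul, mul_assoc, inv_mul_cancel₀ hg, mul_one, map_neg, Algebra.smul_def]; ring
  by_cases h0 : f - c • g = 0
  · exact Or.inl h0
  right
  have h1 : f * g⁻¹ + algebraMap Fq F (-c) ≠ 0 := by
    intro h1; rw [h1, zero_mul] at hfac; exact h0 hfac
  have hcreg : algebraMap Fq F (-c) = 0 ∨ 0 ≤ X.v P (algebraMap Fq F (-c)) := by
    by_cases hc0 : -c = 0
    · left; rw [hc0, map_zero]
    · right; rw [X.v_algebraMap P _ hc0]
  have hev : X.ev P (f * g⁻¹ + algebraMap Fq F (-c)) = 0 := by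
    rw [X.ev_add P _ _ hP (Or.inr hv.ge) hcreg, X.ev_algebraMap, ← hc]; ring
  have hreg : 0 ≤ X.v P (f * g⁻¹ + algebraMap Fq F (-c)) := by
    by_cases hc0 : -c = 0
    · rw [hc0, map_zero, add_zero, hv]
    · have hcF : algebraMap Fq F (-c) ≠ 0 := by simpa using hc0
      have := X.v_add P _ _ hq hcF h1
      rwa [hv, X.v_algebraMap P _ hc0, min_self] at this
  have := (X.ev_eq_zero_iff P _ hP h1 hreg).1 hev
  rw [hfac, X.v_mul P _ _ h1 hg]
  omega

/-- The functions of `U` that vanish or have valuation larger than `k` at `P`. -/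
def valGT (P : Place) (k : ℤ) (U : Submodule Fq F) : Submodule Fq F where
  carrier := {f | f ∈ U ∧ (f = 0 ∨ k < X.v P f)}
  zero_mem' := ⟨U.zero_mem, Or.inl rfl⟩
  add_mem' := by
    rintro f g ⟨hfU, hf⟩ ⟨hgU, hg⟩
    refine ⟨U.add_mem hfU hgU, ?_⟩
    by_cases hf0 : f = 0
    · subst hf0; simpa using hg
    by_cases hg0 : g = 0
    · subst hg0; simpa using hf
    by_cases hs : f + g = 0
    · exact Or.inl hs
    right
    have h1 := X.v_add P f g hf0 hg0 hs
    have h2 := hf.resolve_left hf0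
    have h3 := hg.resolve_left hg0
    exact lt_of_lt_of_le (lt_min h2 h3) h1
  smul_mem' := by
    rintro c f ⟨hfU, hf⟩
    refine ⟨U.smul_mem c hfU, ?_⟩
    by_cases hc : c = 0
    · left; rw [hc, zero_smul]
    by_cases hf0 : f = 0
    · left; rw [hf0, smul_zero]
    right
    rw [Algebra.smul_def, X.v_mul P _ _ (by simpa using hc) hf0, X.v_algebraMap P c hc, zero_add]
    exact hf.resolve_left hf0

/-- At a rational place a space of functions of dimension `d` takes exactly `d` valuations: passing
to the functions of valuation above the minimum lowers both numbers by one. -/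
lemma ncard_valSet {P : Place} (hP : X.IsRational P) :
    ∀ (d : ℕ) (U : Submodule Fq F) [FiniteDimensional Fq U], Module.finrank Fq U = d →
      (X.valSet P U).ncard = d := by
  intro d
  induction d with
  | zero =>
    intro U _ hU
    have hb : U = ⊥ := Submodule.finrank_eq_zero.1 hU
    have : X.valSet P U = ∅ := by
      ext k
      simp only [Set.mem_empty_iff_false, iff_false]
      rintro ⟨f, hf, hf0, -⟩
      rw [hb] at hf
      exact hf0 hf
    rw [this, Set.ncard_empty]
  | succ d ih =>
    intro U _ hU
    have hne : U ≠ ⊥ := by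
      rintro rfl
      simp at hU
    obtain ⟨f₀, hf₀, hf₀0⟩ := U.exists_mem_ne_zero_of_ne_bot hne
    obtain ⟨k, ⟨f, hfU, hf0, rfl⟩, hmin⟩ :=
      Set.exists_min_image (X.valSet P U) id (X.valSet_finite P U) ⟨_, f₀, hf₀, hf₀0, rfl⟩
    have hle : X.valGT P (X.v P f) U ≤ U := fun g hg => hg.1
    have : FiniteDimensional Fq (X.valGT P (X.v P f) U) := Submodule.finiteDimensional_of_le hle
    have hfnot : f ∉ X.valGT P (X.v P f) U := by
      rintro ⟨-, h | h⟩
      · exact hf0 h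
      · exact lt_irrefl _ h
    have hsup : X.valGT P (X.v P f) U ⊔ Submodule.span Fq {f} = U := by
      refine le_antisymm (sup_le hle ((Submodule.span_singleton_le_iff_mem _ _).2 hfU)) ?_
      intro g hg
      rw [Submodule.mem_sup]
      by_cases hg0 : g = 0
      · exact ⟨0, Submodule.zero_mem _, 0, Submodule.zero_mem _, by simp [hg0]⟩
      have hm : X.v P f ≤ X.v P g := hmin _ ⟨g, hg, hg0, rfl⟩
      rcases hm.lt_or_eq with hlt | heq
      · exact ⟨g, ⟨hg, Or.inr hlt⟩, 0, Submodule.zero_mem _, by simp⟩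
      · obtain ⟨c, hc⟩ := X.exists_sub_smul hP hg0 hf0 heq.symm
        refine ⟨g - c • f, ⟨U.sub_mem hg (U.smul_mem c hfU), ?_⟩, c • f,
          Submodule.smul_mem _ _ (Submodule.mem_span_singleton_self f), by simp⟩
        rwa [heq]
    have hrank : Module.finrank Fq (X.valGT P (X.v P f) U) = d := by
      have h1 := Submodule.finrank_sup_add_finrank_inf_eq
        (X.valGT P (X.v P f) U) (Submodule.span Fq {f})
      rw [hsup, (Submodule.disjoint_span_singleton_of_notMem hfnot).eq_bot, finrank_bot,
        finrank_span_singleton hf0, hU] at h1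
      omega
    have hins : X.valSet P U = insert (X.v P f) (X.valSet P (X.valGT P (X.v P f) U)) := by
      ext k
      constructor
      · rintro ⟨g, hg, hg0, rfl⟩
        have hm : X.v P f ≤ X.v P g := hmin _ ⟨g, hg, hg0, rfl⟩
        rcases hm.lt_or_eq with hlt | heq
        · exact Or.inr ⟨g, ⟨hg, Or.inr hlt⟩, hg0, rfl⟩
        · exact Or.inl heq.symm
      · rintro (rfl | ⟨g, hg, hg0, rfl⟩)
        · exact ⟨f, hfU, hf0, rfl⟩
        · exact ⟨g, hg.1, hg0, rfl⟩
    rw [hins, Set.ncard_insert_of_notMem _ (X.valSet_finite P _), ih _ hrank]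
    rintro ⟨g, ⟨-, hg⟩, hg0, hgv⟩
    have := hg.resolve_left hg0
    omega

open scoped Pointwise in
/-- If all products of elements of the nonzero spaces `U` and `V` lie in `W`, then
`dim U + dim V ≤ dim W + 1`. The valuations at a rational place turn this into the sumset bound
`|S| + |T| ≤ |S + T| + 1` for finite sets of integers. -/
lemma finrank_add_le_of_mul_mem {P : Place} (hP : X.IsRational P) (U V W : Submodule Fq F)
    [FiniteDimensional Fq U] [FiniteDimensional Fq V] [FiniteDimensional Fq W]
    (hU : U ≠ ⊥) (hV : V ≠ ⊥) (h : ∀ f ∈ U, ∀ g ∈ V, f * g ∈ W) :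
    Module.finrank Fq U + Module.finrank Fq V ≤ Module.finrank Fq W + 1 := by
  have ne : ∀ U : Submodule Fq F, U ≠ ⊥ → (X.valSet P U).Nonempty := by
    intro U hU
    obtain ⟨f, hf, hf0⟩ := U.exists_mem_ne_zero_of_ne_bot hU
    exact ⟨_, f, hf, hf0, rfl⟩
  have fU := X.valSet_finite P U
  have fV := X.valSet_finite P V
  have fW := X.valSet_finite P W
  have cd := cauchy_davenport_add_of_linearOrder_isCancelAdd
    (s := fU.toFinset) (t := fV.toFinset) (by simpa using ne U hU) (by simpa using ne V hV)
  have hsub : fU.toFinset + fV.toFinset ⊆ fW.toFinset := by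
    intro k hk
    obtain ⟨i, hi, j, hj, rfl⟩ := Finset.mem_add.1 hk
    rw [Set.Finite.mem_toFinset] at hi hj ⊢
    obtain ⟨f, hf, hf0, rfl⟩ := hi
    obtain ⟨g, hg, hg0, rfl⟩ := hj
    exact ⟨f * g, h f hf g hg, mul_ne_zero hf0 hg0, X.v_mul P f g hf0 hg0⟩
  have hc := Finset.card_le_card hsub
  rw [← Set.ncard_eq_toFinset_card _ fU, ← Set.ncard_eq_toFinset_card _ fV] at cd
  rw [← Set.ncard_eq_toFinset_card _ fW] at hc
  rw [X.ncard_valSet hP _ U rfl, X.ncard_valSet hP _ V rfl] at cd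
  rw [X.ncard_valSet hP _ W rfl] at hc
  omega

/-- Clifford's inequality in the range where it is used. -/
lemma ell_lt_genus {P : Place} (hP : X.IsRational P) {E : Place →₀ ℤ} (hg : 1 ≤ X.genus)
    (hE : X.divDeg E ≤ 2 * X.genus - 3) : X.ell E < X.genus := by
  have h1 := X.rr E
  by_cases h2 : X.RR E = ⊥
  · have : X.ell E = 0 := by unfold ell; rw [h2]; simp
    omega
  by_cases h3 : X.RR (X.Kdiv - E) = ⊥
  · have : X.ell (X.Kdiv - E) = 0 := by unfold ell; rw [h3]; simp
    omega
  have h4 : X.ell E + X.ell (X.Kdiv - E) ≤ X.ell X.Kdiv + 1 := by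
    refine X.finrank_add_le_of_mul_mem hP (X.RR E) (X.RR (X.Kdiv - E)) (X.RR X.Kdiv) h2 h3 ?_
    intro f hf g hg
    simpa using X.mul_mem_RR hf hg
  rw [ell_Kdiv] at h4
  omega

end Data
end AGCodes

/-! ### Flags of codes -/

namespace AGCodes

/-- An increasing family of subspaces of `Fq^n` indexed by `ℤ` with exactly `n` jumps
`a 1 < ⋯ < a n` takes only the values `C (a i)`, and `C (a i)` has dimension `i`. -/
lemma exists_flag_index {Fq : Type*} [Field Fq] {n : ℕ} (hn : 1 ≤ n)
    (C : ℤ → Submodule Fq (Fin n → Fq)) (hC : Monotone C) (a : Fin (n + 1) → ℤ)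
    (ha_mono : StrictMono a) (ha₀ : a 0 = a 1 - 1)
    (ha_mem : ∀ i : Fin (n + 1), i ≠ 0 → C (a i) ≠ C (a i - 1))
    (ha_all : ∀ b, C b ≠ C (b - 1) → ∃ i : Fin (n + 1), i ≠ 0 ∧ b = a i) (c : ℤ) :
    ∃ i : Fin (n + 1), C c = C (a i) ∧ Module.finrank Fq (C c) = i := by
  have hconst : ∀ c d : ℤ, c ≤ d → (∀ b, c < b → b ≤ d → C b = C (b - 1)) → C d = C c := by
    intro c d hcd
    induction d, hcd using Int.leInduction with
    | base => intro _; rfl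
    | succ d hd ih =>
      intro h
      rw [h (d + 1) (by omega) le_rfl, add_sub_cancel_right]
      exact ih fun b hb hbd => h b hb (by omega)
  have hle : ∀ i, Module.finrank Fq (C (a i)) < n + 1 := by
    intro i
    have := Submodule.finrank_le (C (a i))
    rw [Module.finrank_fin_fun] at this
    omega
  have hstrict : StrictMono fun i : Fin (n + 1) =>
      (⟨Module.finrank Fq (C (a i)), hle i⟩ : Fin (n + 1)) := by
    intro i j hij
    rw [Fin.mk_lt_mk]
    have hj : j ≠ 0 := (Fin.pos_of_ne_zero (by rintro rfl; exact absurd hij (Fin.not_lt_zero i))).ne'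
    have h1 : C (a i) ≤ C (a j - 1) := hC (by have := ha_mono hij; omega)
    have h2 : C (a j - 1) < C (a j) := lt_of_le_of_ne (hC (by omega)) (ha_mem j hj).symm
    exact Submodule.finrank_lt_finrank_of_lt (h1.trans_lt h2)
  have hdim : ∀ i, Module.finrank Fq (C (a i)) = i := by
    have hid := (hstrict.range_inj strictMono_id).1
      (by rw [Set.range_id, (Finite.injective_iff_surjective.1 hstrict.injective).range_eq])
    intro i
    exact congrArg Fin.val (congrFun hid i)
  suffices h : ∃ i, C c = C (a i) by
    obtain ⟨i, hi⟩ := h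
    exact ⟨i, hi, by rw [hi, hdim]⟩
  have h01 : (0 : Fin (n + 1)) < 1 := by
    rw [Fin.lt_def]
    simp [Nat.mod_eq_of_lt (show 1 < n + 1 by omega)]
  rcases lt_or_ge c (a 0) with hc | hc
  · refine ⟨0, (hconst c (a 0) hc.le ?_).symm⟩
    intro b _ hb
    by_contra hne
    obtain ⟨i, hi, rfl⟩ := ha_all b hne
    have := ha_mono (Fin.pos_of_ne_zero hi)
    omega
  · obtain ⟨i, hi, hmax⟩ := Set.exists_max_image {i | a i ≤ c} id (Set.toFinite _) ⟨0, hc⟩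
    refine ⟨i, hconst (a i) c hi ?_⟩
    intro b hb hbc
    by_contra hne
    obtain ⟨k, -, rfl⟩ := ha_all b hne
    have h1 : k ≤ i := hmax k hbc
    have := ha_mono.monotone h1
    omega

namespace Data

variable {Fq F Place : Type*} [Field Fq] [Fintype Fq] [Field F] [Algebra Fq F]
variable (X : Data Fq F Place)

/-! ### Evaluation at the places of `D` -/

lemma Ddiv_apply {n : ℕ} {PP : Fin n → Place} (hinj : Function.Injective PP) (j : Fin n) :
    Ddiv PP (PP j) = 1 := by
  unfold Ddiv
  rw [Finsupp.finsetSum_apply, Finset.sum_eq_single j]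
  · simp
  · intro i _ hij
    rw [Finsupp.single_apply, if_neg (fun h => hij (hinj h))]
  · simp

lemma Ddiv_apply_of_ne {n : ℕ} {PP : Fin n → Place} {R : Place} (h : ∀ j, PP j ≠ R) :
    Ddiv PP R = 0 := by
  unfold Ddiv
  rw [Finsupp.finsetSum_apply]
  exact Finset.sum_eq_zero fun i _ => by rw [Finsupp.single_apply, if_neg (h i)]

lemma divDeg_Ddiv {n : ℕ} {PP : Fin n → Place} (hr : ∀ j, X.IsRational (PP j)) :
    X.divDeg (Ddiv PP) = n := by
  unfold Ddiv
  rw [divDeg_sum]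
  simp only [divDeg_single, fun j => show X.degP (PP j) = 1 from hr j]
  simp

/-- The functions `τ j` compensate the coefficients of the divisor `E` at the places `PP j`: then
`z * τ j` is regular at `PP j` for every `z ∈ L(E)`. -/
def Adapted {n : ℕ} (PP : Fin n → Place) (τ : Fin n → F) (E : Place →₀ ℤ) : Prop :=
  ∀ j, τ j ≠ 0 ∧ X.v (PP j) (τ j) = E (PP j)

variable {X}

lemma Adapted.regular {n : ℕ} {PP : Fin n → Place} {τ : Fin n → F} {E : Place →₀ ℤ}
    (h : X.Adapted PP τ E) {z : F} (hz : z ∈ X.RR E) (j : Fin n) :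
    z * τ j = 0 ∨ 0 ≤ X.v (PP j) (z * τ j) := by
  by_cases hz0 : z = 0
  · left; rw [hz0, zero_mul]
  right
  rw [X.mem_RR_iff hz0] at hz
  rw [X.v_mul _ _ _ hz0 (h j).1, (h j).2]
  exact hz _

/-- The evaluation map `L(E) → Fq^n`, `z ↦ ((z τ_j)(P_j))_j`. For `τ = 1` its range is the
evaluation code of `E`. -/
def evMap {n : ℕ} {PP : Fin n → Place} (hr : ∀ j, X.IsRational (PP j)) {τ : Fin n → F}
    {E : Place →₀ ℤ} (h : X.Adapted PP τ E) : X.RR E →ₗ[Fq] (Fin n → Fq) where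
  toFun z j := X.ev (PP j) (z * τ j)
  map_add' z w := by
    funext j
    rw [Pi.add_apply, ← X.ev_add (PP j) _ _ (hr j) (h.regular z.2 j) (h.regular w.2 j),
      ← add_mul]
    rfl
  map_smul' c z := by
    funext j
    have hc : algebraMap Fq F c = 0 ∨ 0 ≤ X.v (PP j) (algebraMap Fq F c) := by
      by_cases hc0 : c = 0
      · left; rw [hc0, map_zero]
      · right; rw [X.v_algebraMap _ _ hc0]
    have h1 := X.ev_mul (PP j) _ _ (hr j) hc (h.regular z.2 j)
    rw [X.ev_algebraMap] at h1
    rw [RingHom.id_apply, Pi.smul_apply, smul_eq_mul, ← h1, Submodule.coe_smul, Algebra.smul_def,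
      mul_assoc]

@[simp] lemma evMap_apply {n : ℕ} {PP : Fin n → Place} (hr : ∀ j, X.IsRational (PP j))
    {τ : Fin n → F} {E : Place →₀ ℤ} (h : X.Adapted PP τ E) (z : X.RR E) (j : Fin n) :
    evMap hr h z j = X.ev (PP j) (z * τ j) := rfl

lemma ev_eq_zero_iff' {n : ℕ} {PP : Fin n → Place} (hr : ∀ j, X.IsRational (PP j)) {τ : Fin n → F}
    {E : Place →₀ ℤ} (h : X.Adapted PP τ E) {z : F} (hz : z ∈ X.RR E) (hz0 : z ≠ 0) (j : Fin n) :
    X.ev (PP j) (z * τ j) = 0 ↔ 1 ≤ X.v (PP j) z + E (PP j) := by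
  have hne : z * τ j ≠ 0 := mul_ne_zero hz0 (h j).1
  rw [X.ev_eq_zero_iff (PP j) _ (hr j) hne ((h.regular hz j).resolve_left hne),
    X.v_mul _ _ _ hz0 (h j).1, (h j).2]

/-- The kernel of evaluation on `L(E)` is `L(E - D)`. -/
lemma mem_RR_sub_Ddiv_iff {n : ℕ} {PP : Fin n → Place} (hr : ∀ j, X.IsRational (PP j))
    (hinj : Function.Injective PP) {τ : Fin n → F} {E : Place →₀ ℤ} (h : X.Adapted PP τ E)
    {z : F} (hz : z ∈ X.RR E) :
    z ∈ X.RR (E - Ddiv PP) ↔ ∀ j, X.ev (PP j) (z * τ j) = 0 := by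
  by_cases hz0 : z = 0
  · subst hz0
    refine ⟨fun _ j => ?_, fun _ => Submodule.zero_mem _⟩
    rw [zero_mul]
    simpa using X.ev_algebraMap (PP j) 0
  simp only [ev_eq_zero_iff' hr h hz hz0]
  rw [X.mem_RR_iff hz0]
  constructor
  · intro h1 j
    have := h1 (PP j)
    rw [Finsupp.sub_apply, Ddiv_apply hinj] at this
    omega
  · intro h1 R
    rw [Finsupp.sub_apply]
    by_cases hR : ∃ j, PP j = R
    · obtain ⟨j, rfl⟩ := hR
      rw [Ddiv_apply hinj]
      have := h1 j
      omega
    · rw [Ddiv_apply_of_ne (fun j hj => hR ⟨j, hj⟩), sub_zero]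
      exact (X.mem_RR_iff hz0).1 hz R

lemma ker_evMap {n : ℕ} {PP : Fin n → Place} (hr : ∀ j, X.IsRational (PP j))
    (hinj : Function.Injective PP) {τ : Fin n → F} {E : Place →₀ ℤ} (h : X.Adapted PP τ E) :
    LinearMap.ker (evMap hr h) = (X.RR (E - Ddiv PP)).comap (X.RR E).subtype := by
  ext z
  rw [LinearMap.mem_ker, Submodule.mem_comap, Submodule.subtype_apply,
    mem_RR_sub_Ddiv_iff hr hinj h z.2, funext_iff]
  rfl

lemma finrank_range_evMap {n : ℕ} {PP : Fin n → Place} (hr : ∀ j, X.IsRational (PP j))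
    (hinj : Function.Injective PP) {τ : Fin n → F} {E : Place →₀ ℤ} (h : X.Adapted PP τ E) :
    Module.finrank Fq (LinearMap.range (evMap hr h)) + X.ell (E - Ddiv PP) = X.ell E := by
  have h1 := LinearMap.finrank_range_add_finrank_ker (evMap hr h)
  have hle : X.RR (E - Ddiv PP) ≤ X.RR E := by
    apply X.RR_mono
    intro R
    rw [Finsupp.sub_apply]
    by_cases hR : ∃ j, PP j = R
    · obtain ⟨j, rfl⟩ := hR
      rw [Ddiv_apply hinj]; omega
    · rw [Ddiv_apply_of_ne (fun j hj => hR ⟨j, hj⟩)]; omega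
  rw [ker_evMap hr hinj h, (Submodule.comapSubtypeEquivOfLe hle).finrank_eq] at h1
  exact h1

lemma evMap_injective {n : ℕ} {PP : Fin n → Place} (hr : ∀ j, X.IsRational (PP j))
    (hinj : Function.Injective PP) {τ : Fin n → F} {E : Place →₀ ℤ} (h : X.Adapted PP τ E)
    (hdeg : X.divDeg E < n) : Function.Injective (evMap hr h) := by
  have hneg : X.divDeg (E - Ddiv PP) < 0 := by rw [divDeg_sub, X.divDeg_Ddiv hr]; omega
  rw [← LinearMap.ker_eq_bot, ker_evMap hr hinj h, X.RR_eq_bot_of_neg hneg]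
  simp

end Data
end AGCodes

namespace AGCodes
namespace Data

variable {Fq F Place : Type*} [Field Fq] [Fintype Fq] [Field F] [Algebra Fq F]
variable {X : Data Fq F Place}

/-! ### The canonical divisor attached to an isometry-dual flag -/

/-- A substitute for the residue theorem: some vector `u` without zero entries is orthogonal to all
local evaluations of functions in `L(K + D)`. The space of evaluations has codimension one because
`ℓ(K + D) - ℓ(K) = n - 1`, and it contains no unit vector because `ℓ(K + P_j) = ℓ(K)`. -/
lemma exists_dual_vector {n : ℕ} {PP : Fin n → Place} (hr : ∀ j, X.IsRational (PP j))
    (hinj : Function.Injective PP) (hn : 1 ≤ n) {τ : Fin n → F}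
    (h : X.Adapted PP τ (X.Kdiv + Ddiv PP)) :
    ∃ u : Fin n → Fq, (∀ j, u j ≠ 0) ∧
      ∀ z ∈ X.RR (X.Kdiv + Ddiv PP), ∑ j, u j * X.ev (PP j) (z * τ j) = 0 := by
  have hrank := finrank_range_evMap hr hinj h
  have hdeg : X.divDeg (X.Kdiv + Ddiv PP) = 2 * X.genus - 2 + n := by
    rw [divDeg_add, divDeg_Kdiv, X.divDeg_Ddiv hr]
  have hell := X.ell_of_large (D := X.Kdiv + Ddiv PP) (by rw [hdeg]; omega)
  rw [hdeg] at hell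
  rw [add_sub_cancel_right, ell_Kdiv] at hrank
  set C := LinearMap.range (evMap hr h) with hC
  have hCn : Module.finrank Fq C + 1 = n := by omega
  have hlt : C < ⊤ := by
    rw [lt_top_iff_ne_top]
    intro htop
    rw [htop, finrank_top, Module.finrank_fin_fun] at hCn
    omega
  obtain ⟨φ, hφ, hle⟩ := Submodule.exists_le_ker_of_lt_top C hlt
  have hker : C = LinearMap.ker φ := by
    apply Submodule.eq_of_le_of_finrank_le hle
    have h1 : LinearMap.ker φ ≠ ⊤ := fun h1 => hφ (LinearMap.ker_eq_top.1 h1)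
    have h2 := Submodule.finrank_lt h1
    rw [Module.finrank_fin_fun] at h2
    omega
  refine ⟨fun j => φ (Pi.single j 1), ?_, ?_⟩
  · intro j hj
    have hmem : (Pi.single j 1 : Fin n → Fq) ∈ C := by rw [hker]; exact hj
    obtain ⟨⟨z, hz⟩, hzj⟩ := hmem
    have hz0 : z ≠ 0 := by
      rintro rfl
      have h1 : (⟨0, hz⟩ : X.RR (X.Kdiv + Ddiv PP)) = 0 := rfl
      rw [h1, map_zero] at hzj
      have := congrFun hzj j
      simp at this
    have hzK : z ∈ X.RR (X.Kdiv + Finsupp.single (PP j) 1) := by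
      have hz' := (X.mem_RR_iff hz0).1 hz
      rw [X.mem_RR_iff hz0]
      intro R
      have hzR := hz' R
      rw [Finsupp.add_apply] at hzR ⊢
      by_cases hR : ∃ i, PP i = R
      · obtain ⟨i, rfl⟩ := hR
        by_cases hij : i = j
        · subst hij
          rw [Finsupp.single_eq_same]
          rwa [Ddiv_apply hinj] at hzR
        · have h1 : X.ev (PP i) (z * τ i) = 0 := by
            have := congrFun hzj i
            rwa [evMap_apply, Pi.single_eq_of_ne hij] at this
          rw [ev_eq_zero_iff' hr h hz hz0, Finsupp.add_apply, Ddiv_apply hinj] at h1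
          rw [Finsupp.single_apply, if_neg (fun hh => hij (hinj hh).symm)]
          omega
      · rw [Ddiv_apply_of_ne (fun i hi => hR ⟨i, hi⟩)] at hzR
        rw [Finsupp.single_apply, if_neg (fun hh => hR ⟨j, hh⟩)]
        exact hzR
    have hKle : X.RR X.Kdiv ≤ X.RR (X.Kdiv + Finsupp.single (PP j) 1) := by
      apply X.RR_mono
      intro R
      rw [Finsupp.add_apply, Finsupp.single_apply]
      split_ifs <;> omega
    have hd1 : X.divDeg (X.Kdiv + Finsupp.single (PP j) 1) = 2 * X.genus - 1 := by
      rw [divDeg_add, divDeg_Kdiv, divDeg_single, hr j]; push_cast; ring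
    have he1 := X.ell_of_large hd1.ge
    have hKeq : X.RR X.Kdiv = X.RR (X.Kdiv + Finsupp.single (PP j) 1) := by
      apply Submodule.eq_of_le_of_finrank_le hKle
      have h1 : X.ell (X.Kdiv + Finsupp.single (PP j) 1) ≤ X.ell X.Kdiv := by
        rw [ell_Kdiv]; omega
      exact h1
    rw [← hKeq, ← add_sub_cancel_right X.Kdiv (Ddiv PP), mem_RR_sub_Ddiv_iff hr hinj h hz] at hzK
    have h1 := congrFun hzj j
    rw [evMap_apply, Pi.single_eq_same] at h1
    exact one_ne_zero (h1.symm.trans (hzK j))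
  · intro z hz
    have h1 : evMap hr h ⟨z, hz⟩ ∈ LinearMap.ker φ := by
      rw [← hker]; exact LinearMap.mem_range_self _ _
    rw [LinearMap.mem_ker, LinearMap.pi_apply_eq_sum_univ] at h1
    rw [← h1]
    refine Finset.sum_congr rfl fun j _ => ?_
    rw [evMap_apply, smul_eq_mul, mul_comm]
    congr 1
    refine congrArg φ ?_
    funext i
    rw [Pi.single_apply]
    simp only [eq_comm]

/-- If `f`, `w` have the evaluations of `k`, `z` multiplied by the same vector `s`, then the cross
difference `f z - k w` vanishes on all of `D`. -/
lemma cross_mem {n : ℕ} {PP : Fin n → Place} (hr : ∀ j, X.IsRational (PP j))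
    (hinj : Function.Injective PP) {τ : Fin n → F} {s : Fin n → Fq} {A₁ A₂ B₁ B₂ : Place →₀ ℤ}
    (hA₁ : X.Adapted PP (fun _ => 1) A₁) (hA₂ : X.Adapted PP (fun _ => 1) A₂)
    (hB₁ : X.Adapted PP τ B₁) (hB₂ : X.Adapted PP τ B₂) (hAB : A₁ + B₂ = A₂ + B₁)
    {f k w z : F} (hf : f ∈ X.RR A₁) (hk : k ∈ X.RR B₁) (hw : w ∈ X.RR A₂) (hz : z ∈ X.RR B₂)
    (hfk : ∀ j, X.ev (PP j) f = s j * X.ev (PP j) (k * τ j))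
    (hwz : ∀ j, X.ev (PP j) w = s j * X.ev (PP j) (z * τ j)) :
    f * z - k * w ∈ X.RR (A₁ + B₂ - Ddiv PP) := by
  have hS : X.Adapted PP τ (A₁ + B₂) := by
    intro j
    refine ⟨(hB₂ j).1, ?_⟩
    have h1 := (hA₁ j).2
    rw [v_one] at h1
    rw [(hB₂ j).2, Finsupp.add_apply, ← h1, zero_add]
  have hfz : f * z ∈ X.RR (A₁ + B₂) := X.mul_mem_RR hf hz
  have hwk : w * k ∈ X.RR (A₁ + B₂) := by rw [hAB]; exact X.mul_mem_RR hw hk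
  have hrw : f * z - k * w = f * z - w * k := by ring
  rw [hrw, mem_RR_sub_Ddiv_iff hr hinj hS (Submodule.sub_mem _ hfz hwk)]
  intro j
  have h1 : X.ev (PP j) (f * z * τ j) = X.ev (PP j) f * X.ev (PP j) (z * τ j) := by
    rw [mul_assoc]
    exact X.ev_mul _ _ _ (hr j) (by simpa using hA₁.regular hf j) (hB₂.regular hz j)
  have h2 : X.ev (PP j) (w * k * τ j) = X.ev (PP j) w * X.ev (PP j) (k * τ j) := by
    rw [mul_assoc]
    exact X.ev_mul _ _ _ (hr j) (by simpa using hA₂.regular hw j) (hB₁.regular hk j)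
  have h3 := congrFun ((evMap hr hS).map_sub ⟨f * z, hfz⟩ ⟨w * k, hwk⟩) j
  rw [Pi.sub_apply, evMap_apply, evMap_apply, evMap_apply] at h3
  have h4 : X.ev (PP j) ((f * z - w * k) * τ j)
      = X.ev (PP j) (f * z * τ j) - X.ev (PP j) (w * k * τ j) := h3
  rw [h4, h1, h2, hfk, hwz]
  ring

end Data
end AGCodes

namespace AGCodes
namespace Data

variable {Fq F Place : Type*} [Field Fq] [Fintype Fq] [Field F] [Algebra Fq F]
variable {X : Data Fq F Place}

/-- If multiplication by `h` maps `L(B)` into `L(A)`, where `A` and `B` have degree `2g`, then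
`B = A + (h)`: otherwise `L(B)` would be the Riemann-Roch space of a divisor of degree below `2g`,
too small to have dimension `g + 1`. -/
lemma eq_add_pdiv_of_mul_mem {P : Place} (hP : X.IsRational P) {A B : Place →₀ ℤ}
    (hA : X.divDeg A = 2 * X.genus) (hB : X.divDeg B = 2 * X.genus) {h : F} (hh : h ≠ 0)
    (hmul : ∀ z ∈ X.RR B, h * z ∈ X.RR A) : B = A + X.pdiv h hh := by
  set M : Place →₀ ℤ := B ⊓ (A + X.pdiv h hh) with hM
  have hMB : ∀ R, M R ≤ B R := fun R => by rw [hM, Finsupp.inf_apply]; exact inf_le_left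
  have hMA : ∀ R, M R ≤ (A + X.pdiv h hh) R := fun R => by
    rw [hM, Finsupp.inf_apply]; exact inf_le_right
  have hle : X.RR B ≤ X.RR M := by
    intro z hz
    by_cases hz0 : z = 0
    · rw [hz0]; exact Submodule.zero_mem _
    have h1 := (X.mem_RR_iff (mul_ne_zero hh hz0)).1 (hmul z hz)
    rw [X.mem_RR_iff hz0] at hz ⊢
    intro R
    have h2 := h1 R
    have h3 := hz R
    rw [X.v_mul R h z hh hz0] at h2
    rw [hM, Finsupp.inf_apply, Finsupp.add_apply, pdiv_apply]
    rcases min_choice (B R) (A R + X.v R h) with h4 | h4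
    · change 0 ≤ X.v R z + min (B R) (A R + X.v R h)
      rw [h4]; exact h3
    · change 0 ≤ X.v R z + min (B R) (A R + X.v R h)
      rw [h4]; omega
  have hBM : B - M = 0 := by
    apply X.eq_zero_of_divDeg_nonpos
    · intro R
      have := hMB R
      rw [Finsupp.sub_apply]; omega
    · rw [divDeg_sub, hB]
      by_contra hlt
      have h1 := X.ell_le_genus hP (D := M) (by omega)
      have h2 := X.ell_of_large (D := B) (by omega)
      have h3 : X.ell B ≤ X.ell M := Submodule.finrank_mono hle
      omega
  have hfin : A + X.pdiv h hh - M = 0 := by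
    apply X.eq_zero_of_divDeg_nonpos
    · intro R
      have := hMA R
      rw [Finsupp.sub_apply]; omega
    · have h1 : X.divDeg B - X.divDeg M = 0 := by rw [← divDeg_sub, hBM, divDeg_zero]
      rw [divDeg_sub, divDeg_add, divDeg_pdiv]; omega
  rw [sub_eq_zero.1 hBM, sub_eq_zero.1 hfin]

/-- Let `A₀ ≤ A₁` and `B₀ ≤ B₁` have degrees `2g - 1` and `2g` and differ by the same divisor. If
the functions in `L(B_i)` have, up to the fixed scaling `s`, the same values at the `n ≥ 2g + 2`
places as functions in `L(A_i)`, then `A₁` and `B₁` are linearly equivalent.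

Let `ψ` be the transfer map, `h = ψ(z₀)/z₀`, `δ(z) = h z - ψ(z)`. For `k ∈ ker δ` the product
`k δ(z)` equals `ψ(k) z - k ψ(z)` and so vanishes on `D`. Hence, if `δ ≠ 0`, comparing dimensions of
`ker δ` and `im δ` at the two levels yields a divisor of degree at most `2g - 3` with `ℓ ≥ g`,
against Clifford's inequality. So `ψ` is multiplication by `h`. -/
lemma exists_pdiv_of_transfer {P : Place} (hP : X.IsRational P) {n : ℕ} {PP : Fin n → Place}
    (hr : ∀ j, X.IsRational (PP j)) (hinj : Function.Injective PP)
    (hg : 1 ≤ X.genus) (hn : 2 * X.genus + 2 ≤ n)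
    {τ : Fin n → F} {s : Fin n → Fq} (hs : ∀ j, s j ≠ 0) {A₀ A₁ B₀ B₁ : Place →₀ ℤ}
    (hA₀ : X.Adapted PP (fun _ => 1) A₀) (hA₁ : X.Adapted PP (fun _ => 1) A₁)
    (hB₀ : X.Adapted PP τ B₀) (hB₁ : X.Adapted PP τ B₁)
    (dA₀ : X.divDeg A₀ = 2 * X.genus - 1) (dA₁ : X.divDeg A₁ = 2 * X.genus)
    (dB₀ : X.divDeg B₀ = 2 * X.genus - 1) (dB₁ : X.divDeg B₁ = 2 * X.genus)
    (hAle : ∀ R, A₀ R ≤ A₁ R) (hBle : ∀ R, B₀ R ≤ B₁ R) (hAB : A₀ + B₁ = A₁ + B₀)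
    (tr₀ : ∀ z ∈ X.RR B₀, ∃ f ∈ X.RR A₀, ∀ j, X.ev (PP j) f = s j * X.ev (PP j) (z * τ j))
    (tr₁ : ∀ z ∈ X.RR B₁, ∃ f ∈ X.RR A₁, ∀ j, X.ev (PP j) f = s j * X.ev (PP j) (z * τ j)) :
    ∃ (h : F) (hh : h ≠ 0), B₁ = A₁ + X.pdiv h hh := by
  have injA : Function.Injective (evMap hr hA₁) := evMap_injective hr hinj hA₁ (by omega)
  have injB : Function.Injective (evMap hr hB₁) := evMap_injective hr hinj hB₁ (by omega)
  -- the transfer map `ψ : L(B₁) → L(A₁)`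
  obtain ⟨ψ, hψ⟩ : ∃ ψ : X.RR B₁ →ₗ[Fq] X.RR A₁, ∀ z : X.RR B₁, ∀ j,
      X.ev (PP j) (ψ z : F) = s j * X.ev (PP j) ((z : F) * τ j) := by
    choose f hf hfz using fun z : X.RR B₁ => tr₁ z z.2
    have key : ∀ z : X.RR B₁, evMap hr hA₁ ⟨f z, hf z⟩ = fun j => s j * evMap hr hB₁ z j := by
      intro z
      funext j
      rw [evMap_apply, evMap_apply, mul_one]
      exact hfz z j
    refine ⟨{ toFun := fun z => ⟨f z, hf z⟩, map_add' := ?_, map_smul' := ?_ }, hfz⟩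
    · intro z w
      apply injA
      rw [map_add, key, key, key, map_add]
      funext j
      rw [Pi.add_apply, Pi.add_apply, mul_add]
    · intro c z
      apply injA
      rw [map_smul, key, key, map_smul]
      funext j
      rw [RingHom.id_apply, Pi.smul_apply, Pi.smul_apply, smul_eq_mul, smul_eq_mul]
      ring
  have hBle' : X.RR B₀ ≤ X.RR B₁ := X.RR_mono hBle
  have hAle' : X.RR A₀ ≤ X.RR A₁ := X.RR_mono hAle
  have hψ₀ : ∀ z : X.RR B₁, (z : F) ∈ X.RR B₀ → (ψ z : F) ∈ X.RR A₀ := by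
    intro z hz
    obtain ⟨f, hf, hfz⟩ := tr₀ z hz
    have : ψ z = ⟨f, hAle' hf⟩ := by
      apply injA
      funext j
      rw [evMap_apply, evMap_apply, mul_one, mul_one, hψ]
      exact (hfz j).symm
    rw [this]
    exact hf
  have ellB₀ := X.ell_of_large (D := B₀) (by omega)
  have ellB₁ := X.ell_of_large (D := B₁) (by omega)
  rw [dB₀] at ellB₀
  rw [dB₁] at ellB₁
  obtain ⟨z₀, hz₀, hz₀0⟩ := (X.RR B₀).exists_mem_ne_zero_of_ne_bot (by
    intro hbot
    have : X.ell B₀ = 0 := by unfold ell; rw [hbot]; simp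
    omega)
  set h : F := (ψ ⟨z₀, hBle' hz₀⟩ : F) * z₀⁻¹ with hdef
  have hz₀h : h * z₀ = ψ ⟨z₀, hBle' hz₀⟩ := by rw [hdef, mul_assoc, inv_mul_cancel₀ hz₀0, mul_one]
  have hh : h ≠ 0 := by
    intro h0
    rw [h0, zero_mul] at hz₀h
    have h1 : (⟨z₀, hBle' hz₀⟩ : X.RR B₁) = 0 := by
      apply injB
      funext j
      have h2 := hψ ⟨z₀, hBle' hz₀⟩ j
      rw [← hz₀h] at h2
      have h3 : X.ev (PP j) (0 : F) = 0 := by simpa using X.ev_algebraMap (PP j) 0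
      rw [h3] at h2
      rw [map_zero, evMap_apply, Pi.zero_apply]
      exact (mul_eq_zero.1 h2.symm).resolve_left (hs j)
    exact hz₀0 (congrArg Subtype.val h1)
  let δ : X.RR B₁ →ₗ[Fq] F :=
    (LinearMap.mulLeft Fq h) ∘ₗ (X.RR B₁).subtype - (X.RR A₁).subtype ∘ₗ ψ
  have δ_apply : ∀ z : X.RR B₁, δ z = h * z - ψ z := fun z => rfl
  let ι : X.RR B₀ →ₗ[Fq] X.RR B₁ := Submodule.inclusion hBle'
  let δ₀ : X.RR B₀ →ₗ[Fq] F := δ ∘ₗ ι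
  have rn₁ := LinearMap.finrank_range_add_finrank_ker δ
  have rn₀ := LinearMap.finrank_range_add_finrank_ker δ₀
  set U₁ : Submodule Fq F := (LinearMap.ker δ).map (X.RR B₁).subtype with hU₁
  set U₀ : Submodule Fq F := (LinearMap.ker δ₀).map (X.RR B₀).subtype with hU₀
  have rU₁ : Module.finrank Fq U₁ = Module.finrank Fq (LinearMap.ker δ) :=
    Submodule.finrank_map_subtype_eq _ _
  have rU₀ : Module.finrank Fq U₀ = Module.finrank Fq (LinearMap.ker δ₀) :=
    Submodule.finrank_map_subtype_eq _ _
  have hU : U₀ ≤ U₁ := by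
    rintro _ ⟨z, hz, rfl⟩
    exact ⟨ι z, hz, rfl⟩
  have hU₀ne : U₀ ≠ ⊥ := by
    intro hbot
    have : z₀ ∈ U₀ := by
      refine ⟨⟨z₀, hz₀⟩, ?_, rfl⟩
      change h * z₀ - (ψ ⟨z₀, hBle' hz₀⟩ : F) = 0
      rw [hz₀h, sub_self]
    rw [hbot] at this
    exact hz₀0 this
  have hU₁ne : U₁ ≠ ⊥ := fun hbot => hU₀ne (le_bot_iff.1 (hbot ▸ hU))
  have hcl : X.ell (A₀ + B₁ - Ddiv PP) < X.genus := by
    apply X.ell_lt_genus hP hg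
    rw [divDeg_sub, divDeg_add, X.divDeg_Ddiv hr]
    omega
  -- products of kernel and image elements from different levels vanish on `D`
  have hprod₀₁ : ∀ k ∈ U₀, ∀ w ∈ LinearMap.range δ, k * w ∈ X.RR (A₀ + B₁ - Ddiv PP) := by
    rintro _ ⟨k, hk, rfl⟩ _ ⟨z, rfl⟩
    have hk' : h * (k : F) = ψ (ι k) := sub_eq_zero.1 hk
    have h1 : (X.RR B₀).subtype k * δ z = (ψ (ι k) : F) * z - k * ψ z := by
      rw [δ_apply, ← hk', Submodule.subtype_apply]; ring
    rw [h1]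
    exact cross_mem hr hinj hA₀ hA₁ hB₀ hB₁ hAB (hψ₀ _ k.2) k.2 (ψ z).2 z.2 (hψ (ι k)) (hψ z)
  have hprod₁₀ : ∀ k ∈ U₁, ∀ w ∈ LinearMap.range δ₀, k * w ∈ X.RR (A₀ + B₁ - Ddiv PP) := by
    rintro _ ⟨k, hk, rfl⟩ _ ⟨z, rfl⟩
    have hk' : h * (k : F) = ψ k := sub_eq_zero.1 hk
    have h1 : (X.RR B₁).subtype k * δ₀ z = (ψ k : F) * z - k * ψ (ι z) := by
      change (k : F) * (h * (z : F) - ψ (ι z)) = _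
      rw [← hk']; ring
    rw [h1, hAB]
    exact cross_mem hr hinj hA₁ hA₀ hB₁ hB₀ hAB.symm (ψ k).2 k.2 (hψ₀ _ z.2) z.2 (hψ k)
      (hψ (ι z))
  have hδ : Module.finrank Fq (LinearMap.range δ) = 0 := by
    have rn₁' : Module.finrank Fq (LinearMap.range δ) + Module.finrank Fq U₁ = X.ell B₁ := by
      rw [rU₁]; exact rn₁
    have rn₀' : Module.finrank Fq (LinearMap.range δ₀) + Module.finrank Fq U₀ = X.ell B₀ := by
      rw [rU₀]; exact rn₀
    have hcl' : Module.finrank Fq (X.RR (A₀ + B₁ - Ddiv PP)) < X.genus := hcl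
    have hUr := Submodule.finrank_mono hU
    by_cases hb₁ : LinearMap.range δ = ⊥
    · rw [hb₁, finrank_bot]
    exfalso
    have hne := mt Submodule.finrank_eq_zero.1 hb₁
    have i₁ := X.finrank_add_le_of_mul_mem hP U₀ _ _ hU₀ne hb₁ hprod₀₁
    by_cases hb₀ : LinearMap.range δ₀ = ⊥
    · rw [hb₀, finrank_bot] at rn₀'
      omega
    · have i₀ := X.finrank_add_le_of_mul_mem hP U₁ _ _ hU₁ne hb₀ hprod₁₀
      omega
  have hδ0 : δ = 0 := LinearMap.range_eq_bot.1 (Submodule.finrank_eq_zero.1 hδ)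
  refine ⟨h, hh, eq_add_pdiv_of_mul_mem hP dA₁ dB₁ hh ?_⟩
  intro z hz
  have h1 : h * z - (ψ ⟨z, hz⟩ : F) = 0 := by
    rw [← δ_apply ⟨z, hz⟩, hδ0, LinearMap.zero_apply]
  rw [sub_eq_zero.1 h1]
  exact (ψ ⟨z, hz⟩).2

end Data
end AGCodes

namespace AGCodes
namespace Data

variable {Fq F Place : Type*} [Field Fq] [Fintype Fq] [Field F] [Algebra Fq F]
variable {X : Data Fq F Place}

/-- If every vector orthogonal to `C_L(D, A_{n+2g-2-m})` lies, up to the fixed scaling `x`, in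
`C_L(D, A_m)`, where `A_m` is the divisor `G + cP` of degree `m` and `2g - 1 ≤ m ≤ n - 1`, then
`K + D` is linearly equivalent to `(n + 2g - 2 - 2 deg G) P + 2G`. -/
lemma exists_pdiv_of_dual {P : Place} (hP : X.IsRational P) {n : ℕ} {PP : Fin n → Place}
    (hr : ∀ j, X.IsRational (PP j)) (hinj : Function.Injective PP) (hPP : ∀ j, PP j ≠ P)
    (hn : 2 * X.genus + 2 ≤ n) {G : Place →₀ ℤ} (hG : ∀ j, G (PP j) = 0)
    {x : Fin n → Fq} (hx : ∀ j, x j ≠ 0)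
    (hdual : ∀ m : ℤ, 2 * (X.genus : ℤ) - 1 ≤ m → m ≤ n - 1 → ∀ d : Fin n → Fq,
      (∀ f ∈ X.RR (Finsupp.single P (n + 2 * X.genus - 2 - m - X.divDeg G) + G),
        ∑ j, d j * X.ev (PP j) f = 0) →
      ∃ f ∈ X.RR (Finsupp.single P (m - X.divDeg G) + G), ∀ j, X.ev (PP j) f = x j * d j) :
    ∃ (h : F) (hh : h ≠ 0), X.Kdiv + Ddiv PP
      = Finsupp.single P ((n : ℤ) + 2 * X.genus - 2 - 2 * X.divDeg G) + G + G + X.pdiv h hh := by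
  set σ := X.divDeg G with hσ
  have hdeg : ∀ c : ℤ, X.divDeg (Finsupp.single P c + G) = c + σ := by
    intro c
    rw [divDeg_add, divDeg_single, hP, hσ]; push_cast; ring
  have hKD : X.divDeg (X.Kdiv + Ddiv PP) = n + 2 * X.genus - 2 := by
    rw [divDeg_add, divDeg_Kdiv, X.divDeg_Ddiv hr]; ring
  have hsplit : ∀ c d : ℤ, (Finsupp.single P c + G) + (Finsupp.single P d + G)
      = Finsupp.single P (c + d) + G + G := by
    intro c d
    rw [Finsupp.single_add]; abel
  rcases Nat.eq_zero_or_pos X.genus with hg | hg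
  · -- in genus zero every divisor of degree zero is principal
    set Z := X.Kdiv + Ddiv PP
      - (Finsupp.single P ((n : ℤ) + 2 * X.genus - 2 - 2 * σ) + G + G) with hZ
    have hZdeg : X.divDeg Z = 0 := by
      rw [hZ, divDeg_sub, hKD, divDeg_add, hdeg, ← hσ]; ring
    have hell := X.ell_of_large (D := Z) (by rw [hZdeg, hg]; norm_num)
    obtain ⟨f, hf, hf0⟩ := (X.RR Z).exists_mem_ne_zero_of_ne_bot (by
      intro hbot
      have : X.ell Z = 0 := by unfold ell; rw [hbot]; simp
      omega)
    rw [X.mem_RR_iff hf0] at hf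
    have h0 : X.pdiv f hf0 + Z = 0 := by
      apply X.eq_zero_of_divDeg_nonpos
      · intro R; exact hf R
      · rw [divDeg_add, divDeg_pdiv, hZdeg]; omega
    refine ⟨f⁻¹, inv_ne_zero hf0, ?_⟩
    have h1 : X.pdiv f⁻¹ (inv_ne_zero hf0) = Z := by
      ext R
      have h2 := DFunLike.congr_fun h0 R
      rw [Finsupp.add_apply, pdiv_apply, Finsupp.zero_apply] at h2
      rw [pdiv_apply, X.v_inv R hf0]
      omega
    rw [h1, hZ]
    abel
  · choose τ hτ0 hτ using fun j : Fin n => X.v_exists_eq (PP j) ((X.Kdiv + Ddiv PP) (PP j))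
    have adKD : X.Adapted PP τ (X.Kdiv + Ddiv PP) := fun j => ⟨hτ0 j, hτ j⟩
    obtain ⟨u, hu, hres⟩ := exists_dual_vector hr hinj (by omega) adKD
    have hA0 : ∀ (c : ℤ) (j : Fin n), (Finsupp.single P c + G) (PP j) = 0 := by
      intro c j
      rw [Finsupp.add_apply, Finsupp.single_apply, if_neg (hPP j).symm, hG, add_zero]
    have adA : ∀ c : ℤ, X.Adapted PP (fun _ => 1) (Finsupp.single P c + G) := fun c j =>
      ⟨one_ne_zero, by rw [v_one, hA0]⟩
    have adB : ∀ c : ℤ, X.Adapted PP τ (X.Kdiv + Ddiv PP - (Finsupp.single P c + G)) :=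
      fun c j => ⟨hτ0 j, by rw [Finsupp.sub_apply, hA0, sub_zero, hτ]⟩
    have tr : ∀ m : ℤ, 2 * (X.genus : ℤ) - 1 ≤ m → m ≤ n - 1 →
        ∀ z ∈ X.RR (X.Kdiv + Ddiv PP
          - (Finsupp.single P (n + 2 * X.genus - 2 - m - σ) + G)),
        ∃ f ∈ X.RR (Finsupp.single P (m - σ) + G),
          ∀ j, X.ev (PP j) f = (x j * u j) * X.ev (PP j) (z * τ j) := by
      intro m hm₁ hm₂ z hz
      obtain ⟨f, hf, hfd⟩ := hdual m hm₁ hm₂ (fun j => u j * X.ev (PP j) (z * τ j)) (by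
        intro f hf
        have hzf := X.mul_mem_RR hz hf
        rw [sub_add_cancel] at hzf
        rw [← hres _ hzf]
        refine Finset.sum_congr rfl fun j _ => ?_
        have h1 : z * f * τ j = (z * τ j) * f := by ring
        rw [h1, X.ev_mul _ _ _ (hr j) ((adB _).regular hz j)
          (by simpa using (adA _).regular hf j), mul_assoc])
      exact ⟨f, hf, fun j => by rw [hfd, mul_assoc]⟩
    have hle : ∀ c d : ℤ, c ≤ d → ∀ R,
        (Finsupp.single P c + G) R ≤ (Finsupp.single P d + G) R := by
      intro c d hcd R
      rw [Finsupp.add_apply, Finsupp.add_apply, Finsupp.single_apply, Finsupp.single_apply]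
      split_ifs <;> omega
    obtain ⟨h, hh, heq⟩ := exists_pdiv_of_transfer hP hr hinj hg hn
      (fun j => mul_ne_zero (hx j) (hu j))
      (adA (2 * X.genus - 1 - σ)) (adA (2 * X.genus - σ))
      (adB (n + 2 * X.genus - 2 - (2 * X.genus - 1) - σ))
      (adB (n + 2 * X.genus - 2 - (2 * X.genus) - σ))
      (by rw [hdeg]; ring) (by rw [hdeg]; ring)
      (by rw [divDeg_sub, hKD, hdeg]; ring) (by rw [divDeg_sub, hKD, hdeg]; ring)
      (hle _ _ (by omega))
      (fun R => by
        rw [Finsupp.sub_apply, Finsupp.sub_apply]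
        have := hle ((n : ℤ) + 2 * X.genus - 2 - (2 * X.genus) - σ)
          (n + 2 * X.genus - 2 - (2 * X.genus - 1) - σ) (by omega) R
        omega)
      (by
        have h1 := hsplit (2 * X.genus - 1 - σ) (n + 2 * X.genus - 2 - (2 * X.genus - 1) - σ)
        have h2 := hsplit (2 * X.genus - σ) (n + 2 * X.genus - 2 - (2 * X.genus) - σ)
        have h3 : (2 * X.genus - 1 - σ) + (n + 2 * X.genus - 2 - (2 * X.genus - 1) - σ)
          = (2 * X.genus - σ) + (n + 2 * X.genus - 2 - (2 * X.genus) - σ) := by ring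
        rw [h3, ← h2] at h1
        rw [← add_sub_assoc, ← add_sub_assoc, sub_eq_sub_iff_add_eq_add, add_right_comm, h1]
        abel)
      (tr _ le_rfl (by omega)) (tr _ (by omega) (by omega))
    refine ⟨h, hh, ?_⟩
    rw [sub_eq_iff_eq_add, add_right_comm, hsplit] at heq
    rw [heq]
    congr 4
    ring

lemma Gdiv_apply_of_ne {t : ℕ} {Q : Fin t → Place} {β : Fin t → ℤ} {R : Place}
    (h : ∀ i, R ≠ Q i) : Gdiv Q β R = 0 := by
  unfold Gdiv
  rw [Finsupp.finsetSum_apply]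
  exact Finset.sum_eq_zero fun i _ => by rw [Finsupp.single_apply, if_neg (h i).symm]

lemma divDeg_Gdiv {t : ℕ} {Q : Fin t → Place} {β : Fin t → ℤ} (hQ : ∀ i, X.IsRational (Q i)) :
    X.divDeg (Gdiv Q β) = ∑ i, β i := by
  unfold Gdiv
  rw [divDeg_sum]
  refine Finset.sum_congr rfl fun i _ => ?_
  rw [divDeg_single, hQ i]; simp

end Data
end AGCodes
theorem stmt12 {Fq F Place : Type*} [Field Fq] [Fintype Fq] [Field F] [Algebra Fq F]
    (X : Data Fq F Place) (P : Place) {t : ℕ} (Q : Fin t → Place) (β : Fin t → ℤ)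
    (hPrat : X.IsRational P) (hQrat : ∀ i, X.IsRational (Q i))
    (hQinj : Function.Injective Q) (hPQ : ∀ i, Q i ≠ P)
    (hβ : 0 ≤ ∑ i, β i)
    {n : ℕ} (PP : Fin n → Place) (hPPrat : ∀ j, X.IsRational (PP j))
    (hPPinj : Function.Injective PP)
    (hPPP : ∀ j, PP j ≠ P) (hPPQ : ∀ j i, PP j ≠ Q i)
    (hn : 2 * (X.genus : ℤ) + 2 * (∑ i, β i) + 2 ≤ n)
    (a : Fin (n + 1) → ℤ) (ha_mono : StrictMono a) (ha₀ : a 0 = a 1 - 1)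
    (ha_mem : ∀ i : Fin (n + 1), i ≠ 0 → a i ∈ X.HhatS PP P Q β)
    (ha_all : ∀ b ∈ X.HhatS PP P Q β, ∃ i : Fin (n + 1), i ≠ 0 ∧ b = a i)
    (hdual : ∃ x : Fin n → Fq, IsIsometryDualFlag
      (fun i : Fin (n + 1) => X.code PP (Finsupp.single P (a i) + Gdiv Q β)) x) :
    X.HhatS PP P Q β
      = {b : ℤ | b ∈ X.HhatB P Q β ∧
          ((n : ℤ) + 2 * X.genus - 2 - 2 * (∑ i, β i) - b) + 1 ∈ X.HhatB P Q β} := by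
  set G := Gdiv Q β with hGdef
  have hn' : 2 * X.genus + 2 ≤ n := by omega
  have hdegG : X.divDeg G = ∑ i, β i := Data.divDeg_Gdiv hQrat
  have hG : ∀ j, G (PP j) = 0 := fun j => Data.Gdiv_apply_of_ne (hPPQ j)
  have hdeg : ∀ c : ℤ, X.divDeg (Finsupp.single P c + G) = c + X.divDeg G := by
    intro c
    rw [X.divDeg_add, X.divDeg_single, hPrat]; push_cast; ring
  have adA : ∀ c : ℤ, X.Adapted PP (fun _ => 1) (Finsupp.single P c + G) := fun c j =>
    ⟨one_ne_zero, by
      rw [X.v_one, Finsupp.add_apply, Finsupp.single_apply, if_neg (hPPP j).symm, hG, add_zero]⟩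
  -- the codes of the flag as subspaces
  let C : ℤ → Submodule Fq (Fin n → Fq) := fun c => LinearMap.range (Data.evMap hPPrat (adA c))
  have hcode : ∀ c, X.code PP (Finsupp.single P c + G) = (C c : Set (Fin n → Fq)) := by
    intro c
    ext w
    constructor
    · rintro ⟨z, hz, hw⟩
      exact ⟨⟨z, hz⟩, by funext j; rw [Data.evMap_apply, mul_one, hw]⟩
    · rintro ⟨⟨z, hz⟩, rfl⟩
      exact ⟨z, hz, fun j => by rw [Data.evMap_apply, mul_one]⟩
  have hCmono : Monotone C := by
    rintro c d hcd _ ⟨⟨z, hz⟩, rfl⟩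
    refine ⟨⟨z, X.RR_mono ?_ hz⟩, rfl⟩
    intro R
    rw [Finsupp.add_apply, Finsupp.add_apply, Finsupp.single_apply, Finsupp.single_apply]
    split_ifs <;> omega
  have hHS : ∀ b, b ∈ X.HhatS PP P Q β ↔ C b ≠ C (b - 1) := by
    intro b
    change X.code PP (Finsupp.single P b + G) ≠ X.code PP (Finsupp.single P (b - 1) + G) ↔ _
    rw [hcode, hcode, Ne, SetLike.coe_set_eq]
  have hrank : ∀ c, Module.finrank Fq (C c) + X.ell (Finsupp.single P c + (G - Ddiv PP))
      = X.ell (Finsupp.single P c + G) := by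
    intro c
    rw [← add_sub_assoc]
    exact Data.finrank_range_evMap hPPrat hPPinj (adA c)
  have hindex := exists_flag_index (by omega) C hCmono a ha_mono ha₀
    (fun i hi => (hHS _).1 (ha_mem i hi)) (fun b hb => ha_all b ((hHS b).2 hb))
  obtain ⟨x, hx, hflag⟩ := hdual
  -- complementary degrees in the range `[2g - 1, n - 1]` belong to complementary flag indices
  obtain ⟨h, hh, hZ⟩ := Data.exists_pdiv_of_dual hPrat hPPrat hPPinj hPPP hn' hG hx (by
    intro m hm₁ hm₂ d hd
    have hdim : ∀ m : ℤ, 2 * (X.genus : ℤ) - 1 ≤ m → m ≤ n - 1 →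
        (Module.finrank Fq (C (m - X.divDeg G)) : ℤ) = m + 1 - X.genus := by
      intro m hm₁ hm₂
      have h1 := hrank (m - X.divDeg G)
      rw [X.ell_eq_zero_of_neg (D := Finsupp.single P (m - X.divDeg G) + (G - Ddiv PP))
        (by rw [← add_sub_assoc, X.divDeg_sub, hdeg, X.divDeg_Ddiv hPPrat]; omega)] at h1
      have h2 := X.ell_of_large (D := Finsupp.single P (m - X.divDeg G) + G)
        (by rw [hdeg]; omega)
      rw [hdeg] at h2
      omega
    obtain ⟨i, hi, hir⟩ := hindex (m - X.divDeg G)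
    obtain ⟨k, hk, hkr⟩ := hindex (n + 2 * X.genus - 2 - m - X.divDeg G)
    have d1 := hdim m hm₁ hm₂
    have d2 := hdim (n + 2 * X.genus - 2 - m) (by omega) (by omega)
    have hki : k = Fin.rev i := by
      apply Fin.ext
      rw [Fin.val_rev]
      omega
    have hfl := hflag i
    simp only [hcode] at hfl
    rw [← hki, ← hi, ← hk] at hfl
    have hmem : (fun j => x j * d j) ∈ (C (m - X.divDeg G) : Set (Fin n → Fq)) := by
      rw [hfl]
      refine ⟨d, ?_, rfl⟩
      rintro _ ⟨⟨f, hf⟩, rfl⟩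
      rw [← hd f hf]
      exact Finset.sum_congr rfl fun j _ => by rw [Data.evMap_apply, mul_one]
    obtain ⟨⟨f, hf⟩, hfe⟩ := hmem
    refine ⟨f, hf, fun j => ?_⟩
    have := congrFun hfe j
    rwa [Data.evMap_apply, mul_one] at this)
  -- Riemann-Roch turns the jumps of `ℓ(bP + G - D)` into those of `ℓ(bP + G)`
  have hrr : ∀ b : ℤ, (X.ell (Finsupp.single P b + (G - Ddiv PP)) : ℤ)
      = b + X.divDeg G - n + 1 - X.genus
        + X.ell (Finsupp.single P ((n : ℤ) + 2 * X.genus - 2 - 2 * X.divDeg G - b) + G) := by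
    intro b
    have h1 := X.rr (Finsupp.single P b + (G - Ddiv PP))
    have h2 : X.Kdiv - (Finsupp.single P b + (G - Ddiv PP))
        = Finsupp.single P ((n : ℤ) + 2 * X.genus - 2 - 2 * X.divDeg G - b) + G
          + X.pdiv h hh := by
      have h3 : X.Kdiv - (Finsupp.single P b + (G - Ddiv PP))
          = X.Kdiv + Ddiv PP - Finsupp.single P b - G := by abel
      rw [h3, hZ, Finsupp.single_sub P _ b]
      abel
    rw [h2, X.ell_add_pdiv, ← add_sub_assoc, X.divDeg_sub, hdeg, X.divDeg_Ddiv hPPrat] at h1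
    rw [← add_sub_assoc]
    exact h1
  ext b
  rw [hHS]
  have e1 := hrank b
  have e2 := hrank (b - 1)
  have e3 := hrr b
  have e4 := hrr (b - 1)
  have e5 := X.ell_step hPrat b G
  have e6 : Module.finrank Fq (C (b - 1)) ≤ Module.finrank Fq (C b) :=
    Submodule.finrank_mono (hCmono (by omega))
  have hne : C b ≠ C (b - 1) ↔ Module.finrank Fq (C (b - 1)) ≠ Module.finrank Fq (C b) := by
    rw [not_iff_not]
    refine ⟨fun h => by rw [h], fun h => ?_⟩
    exact (Submodule.eq_of_le_of_finrank_eq (hCmono (by omega)) h).symm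
  rw [hne]
  change _ ↔ (X.ell (Finsupp.single P b + G) ≠ X.ell (Finsupp.single P (b - 1) + G) ∧
    X.ell (Finsupp.single P ((n : ℤ) + 2 * X.genus - 2 - 2 * (∑ i, β i) - b + 1) + G)
      ≠ X.ell (Finsupp.single P ((n : ℤ) + 2 * X.genus - 2 - 2 * (∑ i, β i) - b + 1 - 1) + G))
  rw [← hdegG, add_sub_cancel_right]
  have h7 : (n : ℤ) + 2 * X.genus - 2 - 2 * X.divDeg G - (b - 1)
      = (n : ℤ) + 2 * X.genus - 2 - 2 * X.divDeg G - b + 1 := by ring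
  rw [h7] at e4
  have e8 := X.ell_step hPrat ((n : ℤ) + 2 * X.genus - 2 - 2 * X.divDeg G - b + 1) G
  rw [add_sub_cancel_right] at e8
  omega
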